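/- arXiv:2009.02664 — 2 statements merged into one kernel-verified Lean document; each statement's English description precedes it below -/
import Mathlib

section
/- Every connected graph G with at least 3 vertices satisfies srd(G) ≤ e(G) − 1, where e(G) is the number of edges of G. -/
open SimpleGraph

/-- `F` is an edge-cut of `G` separating `u` and `v`. -/
def CutsBetween {V : Type*} (G : SimpleGraph V) (u v : V) (F : Finset (Sym2 V)) : Prop :=
  ↑F ⊆ G.edgeSet ∧ ¬ (G.deleteEdges ↑F).Reachable u v

/-- `lam G u v` is the minimum number of edges in an edge-cut of `G` separating `u` and `v`. -/
noncomputable def lam {V : Type*} (G : SimpleGraph V) (u v : V) : ℕ :=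
  sInf {n | ∃ F : Finset (Sym2 V), CutsBetween G u v F ∧ F.card = n}

/-- `c` is a strong rainbow disconnection coloring of `G`: every pair of distinct vertices
admits a rainbow minimum edge-cut separating them. -/
def IsSRDColoring {V : Type*} (G : SimpleGraph V) (c : Sym2 V → ℕ) : Prop :=
  ∀ u v : V, u ≠ v → ∃ F : Finset (Sym2 V),
    CutsBetween G u v F ∧ F.card = lam G u v ∧ Set.InjOn c ↑F

/-- The strong rainbow disconnection number of `G`. -/
noncomputable def srd {V : Type*} (G : SimpleGraph V) : ℕ :=
  sInf {k | ∃ c : Sym2 V → ℕ, (∀ e ∈ G.edgeSet, c e < k) ∧ IsSRDColoring G c}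

/-!
It suffices to find two edges `e` and `f` such that every pair of vertices has a minimum edge-cut
not containing both: color them alike and all other edges differently.

If some minimum edge-cut `∂S` leaves an edge inside `S` and one inside `Sᶜ`, take these two. By
submodularity of the cut function minimum edge-cuts uncross, so every pair of vertices has a minimum
edge-cut `∂X` with `X ⊆ S` or `X ⊆ Sᶜ`, and such a cut misses one of the two edges.

Otherwise every minimum edge-cut has an independent side, so the star at one of the two separated
vertices is also a minimum edge-cut. Take two edges at a vertex `x` of maximum degree, or any two
edges if that degree is `1`: no star at another vertex contains both, and the star at `x` can always
be replaced by the star at the other vertex of the pair.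
-/

section EdgeBoundary

variable {V : Type*} {G : SimpleGraph V} {S : Set V} {u v a b : V}

/-- The vertex set `S` separates `u` and `v`: exactly one of the two lies in `S`. Neither side is
distinguished, so that the notion is invariant under complements of `S`. -/
def Separates (S : Set V) (u v : V) : Prop :=
  ¬(u ∈ S ↔ v ∈ S)

theorem Separates.compl (h : Separates S u v) : Separates Sᶜ u v := by
  simpa only [Separates, Set.mem_compl_iff, not_iff_not] using h

theorem separates_singleton_left (h : u ≠ v) : Separates {u} u v := by
  simpa [Separates] using h.symm

theorem separates_singleton_right (h : u ≠ v) : Separates {v} u v := by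
  simpa [Separates] using h

/-- The edge boundary `∂S` of a vertex set `S`, that is, the edge-cut with sides `S` and `Sᶜ`. -/
def edgeBoundary (G : SimpleGraph V) (S : Set V) : Set (Sym2 V) :=
  {e ∈ G.edgeSet | ∃ a ∈ e, ∃ b ∈ e, a ∈ S ∧ b ∉ S}

theorem edgeBoundary_subset_edgeSet : edgeBoundary G S ⊆ G.edgeSet :=
  Set.sep_subset _ _

theorem mk_mem_edgeBoundary : s(a, b) ∈ edgeBoundary G S ↔ G.Adj a b ∧ Separates S a b := by
  simp only [edgeBoundary, Separates, Set.mem_sep_iff, mem_edgeSet, Sym2.mem_iff,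
    exists_eq_or_imp, exists_eq_left]
  tauto

theorem edgeBoundary_compl (G : SimpleGraph V) (S : Set V) :
    edgeBoundary G Sᶜ = edgeBoundary G S := by
  ext ⟨a, b⟩
  simp only [mk_mem_edgeBoundary, Separates, Set.mem_compl_iff, not_iff_not]

theorem edgeBoundary_singleton (G : SimpleGraph V) (v : V) :
    edgeBoundary G {v} = G.incidenceSet v := by
  ext ⟨a, b⟩
  rw [mk_mem_edgeBoundary, mk'_mem_incidenceSet_iff]
  refine and_congr_right fun hab => ?_
  have := hab.ne
  grind [Separates]

theorem incidenceSet_subset_edgeBoundary (hv : v ∈ S) (hS : G.IsIndepSet S) :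
    G.incidenceSet v ⊆ edgeBoundary G S := by
  rintro ⟨a, b⟩ he
  obtain ⟨hab, rfl | rfl⟩ := (mk'_mem_incidenceSet_iff G).1 he
  · have hb : b ∉ S := fun hb => hS hv hb hab.ne hab
    exact mk_mem_edgeBoundary.2 ⟨hab, by simp [Separates, hv, hb]⟩
  · have ha : a ∉ S := fun ha => hS ha hv hab.ne hab
    exact mk_mem_edgeBoundary.2 ⟨hab, by simp [Separates, hv, ha]⟩

theorem encard_edgeBoundary_inter_add_union_le (G : SimpleGraph V) (X S : Set V) :
    (edgeBoundary G (X ∩ S)).encard + (edgeBoundary G (X ∪ S)).encard ≤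
      (edgeBoundary G X).encard + (edgeBoundary G S).encard := by
  rw [← Set.encard_union_add_encard_inter, ← Set.encard_union_add_encard_inter (edgeBoundary G X)]
  refine add_le_add (Set.encard_le_encard ?_) (Set.encard_le_encard ?_) <;>
  · rintro ⟨a, b⟩
    simp only [Set.mem_union, Set.mem_inter_iff, mk_mem_edgeBoundary, Separates]
    tauto

theorem not_reachable_deleteEdges_edgeBoundary (h : Separates S u v) :
    ¬(G.deleteEdges (edgeBoundary G S)).Reachable u v := by
  have same_side {a b : V} (hab : (G.deleteEdges (edgeBoundary G S)).Adj a b) :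
      a ∈ S ↔ b ∈ S := by
    rw [deleteEdges_adj, mk_mem_edgeBoundary] at hab
    exact not_not.1 fun hsep => hab.2 ⟨hab.1, hsep⟩
  rintro ⟨p⟩
  apply h
  clear h
  induction p with
  | nil => rfl
  | cons hab _ ih => exact (same_side hab).trans ih

theorem CutsBetween.exists_edgeBoundary_subset {F : Finset (Sym2 V)} (h : CutsBetween G u v F) :
    ∃ S : Set V, Separates S u v ∧ edgeBoundary G S ⊆ F := by
  let S : Set V := {w | (G.deleteEdges ↑F).Reachable u w}
  have hu : u ∈ S := Reachable.refl u
  have hv : v ∉ S := h.2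
  refine ⟨S, by simp [Separates, hu, hv], ?_⟩
  rintro ⟨a, b⟩ he
  obtain ⟨hab, hsep⟩ := mk_mem_edgeBoundary.1 he
  by_contra hF
  have hab' : (G.deleteEdges ↑F).Adj a b := deleteEdges_adj.2 ⟨hab, hF⟩
  exact hsep ⟨fun ha => ha.trans hab'.reachable, fun hb => hb.trans hab'.symm.reachable⟩

end EdgeBoundary

section MinCut

variable {V : Type*} {G : SimpleGraph V} {S X Y : Set V} {s t u v : V}

/-- `∂S` is a minimum edge-cut separating `u` and `v`; either of the two may lie in `S`. A minimum
edge-cut is represented by one of its sides, because cuts are uncrossed on the level of sides. The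
definition is meant for graphs with finitely many edges, as `ncard` is `0` on infinite sets. -/
def IsMinCut (G : SimpleGraph V) (S : Set V) (u v : V) : Prop :=
  Separates S u v ∧ (edgeBoundary G S).ncard = lam G u v

theorem IsMinCut.compl (h : IsMinCut G S u v) : IsMinCut G Sᶜ u v :=
  ⟨h.1.compl, by rw [edgeBoundary_compl, h.2]⟩

variable [Finite G.edgeSet]

theorem finite_edgeBoundary (G : SimpleGraph V) [Finite G.edgeSet] (S : Set V) :
    (edgeBoundary G S).Finite :=
  G.edgeSet.toFinite.subset edgeBoundary_subset_edgeSet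

theorem cutsBetween_edgeBoundary (h : Separates S u v) :
    CutsBetween G u v (finite_edgeBoundary G S).toFinset := by
  rw [CutsBetween, Set.Finite.coe_toFinset]
  exact ⟨edgeBoundary_subset_edgeSet, not_reachable_deleteEdges_edgeBoundary h⟩

theorem lam_le_ncard_edgeBoundary (h : Separates S u v) :
    lam G u v ≤ (edgeBoundary G S).ncard :=
  Nat.sInf_le ⟨_, cutsBetween_edgeBoundary h, (Set.ncard_eq_toFinset_card _ _).symm⟩

theorem exists_isMinCut (G : SimpleGraph V) [Finite G.edgeSet] (h : u ≠ v) :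
    ∃ S, IsMinCut G S u v := by
  have hcut : {n | ∃ F : Finset (Sym2 V), CutsBetween G u v F ∧ F.card = n}.Nonempty :=
    ⟨_, _, cutsBetween_edgeBoundary (separates_singleton_left h), rfl⟩
  obtain ⟨F, hF, hcard⟩ := Nat.sInf_mem hcut
  obtain ⟨S, hS, hSF⟩ := hF.exists_edgeBoundary_subset
  refine ⟨S, hS, le_antisymm ?_ (lam_le_ncard_edgeBoundary hS)⟩
  calc (edgeBoundary G S).ncard ≤ (F : Set (Sym2 V)).ncard := Set.ncard_le_ncard hSF
    _ = F.card := Set.ncard_coe_finset F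
    _ = lam G u v := hcard

theorem IsMinCut.ncard_le (hS : IsMinCut G S u v) (hX : Separates X u v) :
    (edgeBoundary G S).ncard ≤ (edgeBoundary G X).ncard :=
  hS.2.trans_le (lam_le_ncard_edgeBoundary hX)

theorem IsMinCut.of_ncard_le (hX : IsMinCut G X u v) (hY : Separates Y u v)
    (h : (edgeBoundary G Y).ncard ≤ (edgeBoundary G X).ncard) : IsMinCut G Y u v :=
  ⟨hY, (h.trans_eq hX.2).antisymm (lam_le_ncard_edgeBoundary hY)⟩

theorem IsMinCut.inter (hX : IsMinCut G X u v) (hS : IsMinCut G S s t)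
    (hunion : Separates (X ∪ S) s t) (hinter : Separates (X ∩ S) u v) :
    IsMinCut G (X ∩ S) u v := by
  have hsub := encard_edgeBoundary_inter_add_union_le G X S
  simp only [← (finite_edgeBoundary G _).cast_ncard_eq, ← Nat.cast_add, Nat.cast_le] at hsub
  have hmin := hS.ncard_le hunion
  exact hX.of_ncard_le hinter (by omega)

theorem IsMinCut.exists_noncrossing (hS : IsMinCut G S s t) (huv : u ≠ v) :
    ∃ X, IsMinCut G X u v ∧ (X ⊆ S ∨ X ⊆ Sᶜ) := by
  obtain ⟨X, hX⟩ := exists_isMinCut G huv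
  wlog hsX : s ∉ X generalizing X
  · exact this Xᶜ hX.compl hsX
  wlog hsS : s ∈ S generalizing S
  · simpa only [compl_compl, or_comm] using this hS.compl hsS
  have htS : t ∉ S := fun ht => hS.1 (iff_of_true hsS ht)
  have hXuv := hX.1
  have hunion' : Separates (X ∪ Sᶜ) s t := by simp [Separates, hsX, hsS, htS]
  by_cases htX : t ∈ X
  · have hXst : Separates X s t := by simp [Separates, hsX, htX]
    have hunion : Separates (Xᶜ ∪ S) s t := by simp [Separates, hsS, htS, htX]
    have hcases : Separates S u v ∨ Separates (Xᶜ ∩ S) u v ∨ Separates (X ∩ Sᶜ) u v := by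
      grind [Separates]
    obtain hSuv | hinter | hinter := hcases
    · exact ⟨S, hX.of_ncard_le hSuv (hS.ncard_le hXst), .inl subset_rfl⟩
    · exact ⟨Xᶜ ∩ S, hX.compl.inter hS hunion hinter, .inl Set.inter_subset_right⟩
    · exact ⟨X ∩ Sᶜ, hX.inter hS.compl hunion' hinter, .inr Set.inter_subset_right⟩
  · have hunion : Separates (X ∪ S) s t := by simp [Separates, hsS, htS, htX]
    have hcases : Separates (X ∩ S) u v ∨ Separates (X ∩ Sᶜ) u v := by
      grind [Separates]
    obtain hinter | hinter := hcases
    · exact ⟨X ∩ S, hX.inter hS hunion hinter, .inl Set.inter_subset_right⟩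
    · exact ⟨X ∩ Sᶜ, hX.inter hS.compl hunion' hinter, .inr Set.inter_subset_right⟩

theorem IsMinCut.singleton_or_singleton_of_isIndepSet (hS : IsMinCut G S u v) (huv : u ≠ v)
    (hind : G.IsIndepSet S) : IsMinCut G {u} u v ∨ IsMinCut G {v} u v := by
  have star_le {w : V} (hw : w ∈ S) :
      (edgeBoundary G {w}).ncard ≤ (edgeBoundary G S).ncard := by
    rw [edgeBoundary_singleton]
    exact Set.ncard_le_ncard (incidenceSet_subset_edgeBoundary hw hind) (finite_edgeBoundary G S)
  have hmem : u ∈ S ∨ v ∈ S := by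
    by_contra! h
    exact hS.1 (iff_of_false h.1 h.2)
  exact hmem.imp (fun hu => hS.of_ncard_le (separates_singleton_left huv) (star_le hu))
    fun hv => hS.of_ncard_le (separates_singleton_right huv) (star_le hv)

end MinCut

section Coloring

variable {V : Type*} {G : SimpleGraph V} [Finite G.edgeSet]

theorem srd_le_ncard_image {α : Type*} (c : Sym2 V → α)
    (hc : ∀ u v, u ≠ v → ∃ X, IsMinCut G X u v ∧ Set.InjOn c (edgeBoundary G X)) :
    srd G ≤ (c '' G.edgeSet).ncard := by
  have hfin : (c '' G.edgeSet).Finite := G.edgeSet.toFinite.image c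
  obtain ⟨φ, hφ, hinj⟩ := hfin.exists_injOn_of_encard_le
    (t := Set.Iio (c '' G.edgeSet).ncard) (by
      rw [← hfin.cast_ncard_eq, ← (Set.finite_Iio _).cast_ncard_eq, Set.ncard_Iio_nat])
  refine Nat.sInf_le ⟨φ ∘ c, fun e he => hφ (Set.mem_image_of_mem c he), fun u v huv => ?_⟩
  obtain ⟨X, hX, hcX⟩ := hc u v huv
  refine ⟨_, cutsBetween_edgeBoundary hX.1, ?_, ?_⟩
  · rw [← hX.2, Set.ncard_eq_toFinset_card _ (finite_edgeBoundary G X)]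
  · rw [Set.Finite.coe_toFinset]
    exact hinj.comp hcX fun e he => Set.mem_image_of_mem c (edgeBoundary_subset_edgeSet he)

theorem srd_le_of_forall_isMinCut_notMem {e f : Sym2 V} (he : e ∈ G.edgeSet)
    (hf : f ∈ G.edgeSet) (hef : e ≠ f)
    (h : ∀ u v, u ≠ v → ∃ X, IsMinCut G X u v ∧ ¬(e ∈ edgeBoundary G X ∧ f ∈ edgeBoundary G X)) :
    srd G ≤ Nat.card G.edgeSet - 1 := by
  classical
  let merge : Sym2 V → Sym2 V := Function.update id f e
  have himage : merge '' G.edgeSet ⊆ G.edgeSet \ {f} := by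
    rintro _ ⟨g, hg, rfl⟩
    by_cases hgf : g = f <;> simp_all [merge]
  have hmerge {g g' : Sym2 V} (h : merge g = merge g') :
      g = g' ∨ (g = e ∧ g' = f) ∨ (g = f ∧ g' = e) := by
    grind
  calc srd G ≤ (merge '' G.edgeSet).ncard := srd_le_ncard_image merge fun u v huv => by
        obtain ⟨X, hX, hnot⟩ := h u v huv
        refine ⟨X, hX, fun g hg g' hg' hgg' => ?_⟩
        obtain h | ⟨rfl, rfl⟩ | ⟨rfl, rfl⟩ := hmerge hgg'
        exacts [h, absurd ⟨hg, hg'⟩ hnot, absurd ⟨hg', hg⟩ hnot]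
    _ ≤ (G.edgeSet \ {f}).ncard := Set.ncard_le_ncard himage G.edgeSet.toFinite.sdiff
    _ = Nat.card G.edgeSet - 1 := by
        rw [Set.ncard_sdiff_singleton_of_mem hf, Nat.card_coe_set_eq]

theorem srd_le_of_isMinCut_of_not_isIndepSet {S : Set V} {s t : V} (hS : IsMinCut G S s t)
    (hin : ¬G.IsIndepSet S) (hout : ¬G.IsIndepSet Sᶜ) : srd G ≤ Nat.card G.edgeSet - 1 := by
  simp only [isIndepSet_iff, Set.Pairwise, not_forall, not_not] at hin hout
  obtain ⟨a, ha, b, hb, -, hab⟩ := hin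
  obtain ⟨c, hc, d, hd, -, hcd⟩ := hout
  have hne : s(a, b) ≠ s(c, d) := by grind
  refine srd_le_of_forall_isMinCut_notMem hab hcd hne fun u v huv => ?_
  obtain ⟨X, hX, hXS | hXS⟩ := hS.exists_noncrossing huv
  · refine ⟨X, hX, fun h => (mk_mem_edgeBoundary.1 h.2).2 ?_⟩
    exact iff_of_false (fun h => hc (hXS h)) fun h => hd (hXS h)
  · refine ⟨X, hX, fun h => (mk_mem_edgeBoundary.1 h.1).2 ?_⟩
    exact iff_of_false (fun h => hXS h ha) fun h => hXS h hb

theorem exists_forall_ncard_incidenceSet_le (G : SimpleGraph V) [Finite G.edgeSet] [Nonempty V] :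
    ∃ x, ∀ v, (G.incidenceSet v).ncard ≤ (G.incidenceSet x).ncard := by
  have hbdd : BddAbove (Set.range fun v => (G.incidenceSet v).ncard) :=
    ⟨G.edgeSet.ncard, Set.forall_mem_range.2 fun v => Set.ncard_le_ncard (G.incidenceSet_subset v)⟩
  obtain ⟨_, ⟨x, rfl⟩, hx⟩ := hbdd.exists_isGreatest_of_nonempty (Set.range_nonempty _)
  exact ⟨x, Set.forall_mem_range.1 hx⟩

theorem exists_edges_notMem_incidenceSet_of_ne (hE : G.edgeSet.Nontrivial) {x : V}
    (hx : ∀ v, (G.incidenceSet v).ncard ≤ (G.incidenceSet x).ncard) :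
    ∃ e ∈ G.edgeSet, ∃ f ∈ G.edgeSet, e ≠ f ∧
      ∀ v ≠ x, ¬(e ∈ G.incidenceSet v ∧ f ∈ G.incidenceSet v) := by
  have hfin (v : V) : (G.incidenceSet v).Finite :=
    G.edgeSet.toFinite.subset (G.incidenceSet_subset v)
  by_cases hdeg : 1 < (G.incidenceSet x).ncard
  · obtain ⟨e, he, f, hf, hef⟩ := (Set.one_lt_ncard (hfin x)).1 hdeg
    refine ⟨e, he.1, f, hf.1, hef, fun v hv ⟨hev, hfv⟩ => hef ?_⟩
    have hsub := G.incidenceSet_inter_incidenceSet_subset hv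
    exact (hsub ⟨hev, he⟩).trans (hsub ⟨hfv, hf⟩).symm
  · obtain ⟨e, he, f, hf, hef⟩ := hE
    refine ⟨e, he, f, hf, hef, fun v _ ⟨hev, hfv⟩ => hef ?_⟩
    exact (Set.ncard_le_one (hfin v)).1 ((hx v).trans (not_lt.1 hdeg)) e hev f hfv

theorem srd_le_of_forall_isMinCut_singleton (hE : G.edgeSet.Nontrivial)
    (h : ∀ u v, u ≠ v → IsMinCut G {u} u v ∨ IsMinCut G {v} u v) :
    srd G ≤ Nat.card G.edgeSet - 1 := by
  have : Nonempty V := hE.nonempty.elim fun e _ => ⟨e.out.1⟩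
  obtain ⟨x, hx⟩ := exists_forall_ncard_incidenceSet_le G
  obtain ⟨e, he, f, hf, hef, hstar⟩ := exists_edges_notMem_incidenceSet_of_ne hE hx
  simp only [← edgeBoundary_singleton] at hx hstar
  refine srd_le_of_forall_isMinCut_notMem he hf hef fun u v huv => ?_
  suffices ∃ w, w ≠ x ∧ IsMinCut G {w} u v from
    this.elim fun w hw => ⟨{w}, hw.2, hstar w hw.1⟩
  have replace_star {w w' : V} (hw : IsMinCut G {w} u v) (hw' : Separates {w'} u v)
      (hne : w' ≠ w) : ∃ z, z ≠ x ∧ IsMinCut G {z} u v := by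
    by_cases hwx : w = x
    · subst hwx
      exact ⟨w', hne, hw.of_ncard_le hw' (hx w')⟩
    · exact ⟨w, hwx, hw⟩
  exact (h u v huv).elim (fun hu => replace_star hu (separates_singleton_right huv) huv.symm)
    fun hv => replace_star hv (separates_singleton_left huv) huv

end Coloring

theorem nontrivial_edgeSet_of_connected {V : Type*} {G : SimpleGraph V}
    (hG : G.Connected) (hV : 3 ≤ Nat.card V) : G.edgeSet.Nontrivial := by
  have hcard := hG.card_vert_le_card_edgeSet_add_one
  rw [Nat.card_coe_set_eq] at hcard
  exact (Set.one_lt_ncard_iff_nontrivial_and_finite.1 (by omega)).1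

theorem stmt1_general {V : Type*} (G : SimpleGraph V) [Finite G.edgeSet]
    (hE : G.edgeSet.Nontrivial) : srd G ≤ Nat.card G.edgeSet - 1 := by
  by_cases h : ∃ S s t, IsMinCut G S s t ∧ ¬G.IsIndepSet S ∧ ¬G.IsIndepSet Sᶜ
  · obtain ⟨S, s, t, hS, hin, hout⟩ := h
    exact srd_le_of_isMinCut_of_not_isIndepSet hS hin hout
  refine srd_le_of_forall_isMinCut_singleton hE fun u v huv => ?_
  obtain ⟨S, hS⟩ := exists_isMinCut G huv
  by_cases hind : G.IsIndepSet S
  · exact hS.singleton_or_singleton_of_isIndepSet huv hind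
  · have hind' : G.IsIndepSet Sᶜ := by
      by_contra hout
      exact h ⟨S, u, v, hS, hind, hout⟩
    exact hS.compl.singleton_or_singleton_of_isIndepSet huv hind'

theorem stmt1 {V : Type*} [Fintype V] (G : SimpleGraph V) (hV : 3 ≤ Fintype.card V)
    (hG : G.Connected) :
    srd G ≤ Nat.card G.edgeSet - 1 := by
  rw [← Nat.card_eq_fintype_card] at hV
  exact stmt1_general G (nontrivial_edgeSet_of_connected hG hV)
end

section
/- For a nontrivial connected graph G, srd(G) = 2 if and only if every block of G is either a single edge K_2 or a cycle, and at least one block of G is a cycle. -/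
open SimpleGraph

/-- `B` is a block of `G`: a maximal connected subgraph without cut-vertices. -/
def IsBlock {V : Type*} (G : SimpleGraph V) (B : G.Subgraph) : Prop :=
  B.verts.Nonempty ∧ B.coe.Connected ∧
  (∀ v : B.verts, (B.coe.induce {w | w ≠ v}).Preconnected) ∧
  ∀ B' : G.Subgraph, B ≤ B' → B'.coe.Connected →
    (∀ v : B'.verts, (B'.coe.induce {w | w ≠ v}).Preconnected) → B = B'

/-- `H` is a cycle graph: connected and 2-regular. -/
def IsCycleGraph {W : Type*} (H : SimpleGraph W) : Prop :=
  H.Connected ∧ ∀ v : W, Nat.card (H.neighborSet v) = 2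

/-! A minimum cut that is rainbow in two colors has at most two edges, so no two vertices are
`3`-edge-reachable. A vertex of degree at least `3` in a nonseparable subgraph breaks this: deleting
it leaves three of its neighbors connected, so they are joined to a common vertex by edge-disjoint
walks. Hence every block is an edge or a cycle. Conversely, color a spanning forest with `0` and
all other edges with `1`. A fundamental cut contains one edge of the forest, and at most one other
edge: two fundamental cycles through the same forest edge lie in one block, which is a cycle, so
they coincide. By the same coloring, one color suffices exactly for acyclic graphs. -/

section Nonseparable

variable {V : Type*} {G : SimpleGraph V} {B C : G.Subgraph}

/-- Nonseparable subgraphs: connected and without a cut-vertex. Both conditions are expressed at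
once by deleting a set `S` with at most one element: `S = ∅` gives connectedness and `S = {v}`
says that `v` is not a cut-vertex. The empty subgraph is allowed. -/
def IsNonseparable (B : G.Subgraph) : Prop :=
  ∀ S : Set V, S.Subsingleton → (B.deleteVerts S).Preconnected

lemma isNonseparable_iff_preconnected : IsNonseparable B ↔
    B.Preconnected ∧ ∀ v ∈ B.verts, (B.deleteVerts {v}).Preconnected := by
  refine ⟨fun h => ⟨?_, fun v _ => h {v} Set.subsingleton_singleton⟩, fun ⟨hB, hv⟩ S hS => ?_⟩
  · simpa only [Subgraph.deleteVerts_empty] using h ∅ Set.subsingleton_empty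
  · rw [← Subgraph.deleteVerts_inter_verts_left_eq]
    obtain h | ⟨v, h⟩ := (hS.anti Set.inter_subset_right :
      (B.verts ∩ S).Subsingleton).eq_empty_or_singleton
    · rwa [h, Subgraph.deleteVerts_empty]
    · rw [h]
      exact hv v (h.symm.subset rfl).1

lemma isNonseparable_iff_coe (hB : B.verts.Nonempty) : IsNonseparable B ↔
    B.coe.Connected ∧ ∀ v : B.verts, (B.coe.induce {w | w ≠ v}).Preconnected := by
  have hdelete (v : B.verts) :
      (B.deleteVerts {v.1}).Preconnected ↔ (B.coe.induce {w | w ≠ v}).Preconnected := by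
    have hset : {w | w ≠ v} = {w : B.verts | w.1 ∉ ({v.1} : Set V)} := by
      ext w
      simp [Subtype.ext_iff]
    rw [Subgraph.preconnected_iff, (Subgraph.coeDeleteVertsIso {v.1}).preconnected_iff, hset]
  rw [isNonseparable_iff_preconnected, ← Subgraph.connected_iff', Subgraph.connected_iff]
  simp only [hB, and_true, ← hdelete, Subtype.forall]

lemma IsNonseparable.preconnected (hB : IsNonseparable B) : B.Preconnected :=
  (isNonseparable_iff_preconnected.1 hB).1

lemma IsNonseparable.sup (hB : IsNonseparable B) (hC : IsNonseparable C)
    (h : (B.verts ∩ C.verts).Nontrivial) : IsNonseparable (B ⊔ C) := by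
  intro S hS
  obtain ⟨r, ⟨hrB, hrC⟩, hrS⟩ : ∃ r ∈ B.verts ∩ C.verts, r ∉ S := by
    by_contra! hsub
    exact Set.not_subsingleton_iff.2 h (hS.anti hsub)
  have hconn : (B.deleteVerts S ⊔ C.deleteVerts S).Connected :=
    Subgraph.connected_sup (hB S hS) (hC S hS) ⟨r, ⟨hrB, hrS⟩, hrC, hrS⟩
  refine (hconn.mono (sup_le ?_ ?_) Set.union_sdiff_distrib.symm).preconnected
  exacts [Subgraph.deleteVerts_mono le_sup_left, Subgraph.deleteVerts_mono le_sup_right]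

lemma IsNonseparable.sSup {c : Set G.Subgraph} (hc : DirectedOn (· ≤ ·) c)
    (h : ∀ B ∈ c, IsNonseparable B) : IsNonseparable (sSup c) := by
  intro S hS
  rw [Subgraph.preconnected_iff_forall_exists_walk_subgraph]
  rintro x y ⟨hx, hxS⟩ ⟨hy, hyS⟩
  simp only [Subgraph.verts_sSup, Set.mem_iUnion] at hx hy
  obtain ⟨B₁, hB₁, hx⟩ := hx
  obtain ⟨B₂, hB₂, hy⟩ := hy
  obtain ⟨B, hB, hle₁, hle₂⟩ := hc B₁ hB₁ B₂ hB₂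
  obtain ⟨p, hp⟩ := (Subgraph.preconnected_iff_forall_exists_walk_subgraph _).1 (h B hB S hS)
    ⟨hle₁.1 hx, hxS⟩ ⟨hle₂.1 hy, hyS⟩
  exact ⟨p, hp.trans (Subgraph.deleteVerts_mono (le_sSup hB))⟩

lemma isNonseparable_subgraphOfAdj {u v : V} (h : G.Adj u v) :
    IsNonseparable (G.subgraphOfAdj h) := by
  refine isNonseparable_iff_preconnected.2
    ⟨(Subgraph.subgraphOfAdj_connected h).preconnected, fun w hw => ?_⟩
  have : Subsingleton ((G.subgraphOfAdj h).deleteVerts {w}).verts := by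
    rw [Set.subsingleton_coe]
    rintro x ⟨hx, hxw⟩ y ⟨hy, hyw⟩
    simp only [subgraphOfAdj_verts, Set.mem_insert_iff, Set.mem_singleton_iff] at *
    grind
  exact ⟨Preconnected.of_subsingleton⟩

lemma preconnected_deleteVerts_toSubgraph_of_isCycle {v : V} {c : G.Walk v v} (hc : c.IsCycle) :
    (c.toSubgraph.deleteVerts {v}).Preconnected := by
  cases c with
  | nil => exact absurd hc Walk.not_isCycle_nil
  | cons h p =>
    cases p with
    | nil => exact absurd h G.irrefl
    | cons h₂ p =>
      obtain ⟨x, q, h₃, hq⟩ := Walk.exists_cons_eq_concat h₂ p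
      rw [hq] at hc ⊢
      have hv : v ∉ q.support :=
        ((Walk.concat_isPath_iff h₃).1 ((Walk.cons_isCycle_iff _ _).1 hc).1).2
      refine (q.toSubgraph_connected.mono' (fun y z hyz => ?_) ?_).preconnected
      · have hy := (Walk.mem_verts_toSubgraph q).1 hyz.fst_mem
        have hz := (Walk.mem_verts_toSubgraph q).1 hyz.snd_mem
        rw [Walk.adj_toSubgraph_iff_mem_edges] at hyz
        simp only [Subgraph.deleteVerts_adj, Walk.adj_toSubgraph_iff_mem_edges,
          Walk.mem_verts_toSubgraph, Walk.edges_cons, Walk.edges_concat, Walk.support_cons,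
          Walk.support_concat, Set.mem_singleton_iff]
        grind
      · ext y
        have := q.start_mem_support
        simp only [Walk.verts_toSubgraph, Subgraph.deleteVerts_verts, Walk.support_cons,
          Walk.support_concat, Set.mem_sdiff, Set.mem_ofPred_eq, Set.mem_singleton_iff]
        grind

lemma isNonseparable_toSubgraph_of_isCycle {u : V} {c : G.Walk u u} (hc : c.IsCycle) :
    IsNonseparable c.toSubgraph := by
  classical
  refine isNonseparable_iff_preconnected.2 ⟨c.toSubgraph_connected.preconnected, fun v hv => ?_⟩
  rw [Walk.mem_verts_toSubgraph] at hv
  rw [← c.toSubgraph_rotate hv]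
  exact preconnected_deleteVerts_toSubgraph_of_isCycle (hc.rotate hv)

lemma exists_mem_ne_ne_of_ncard_ne_two {s : Set V} (hs : s.ncard ≠ 2) {x y : V} (hx : x ∈ s)
    (hy : y ∈ s) (hxy : x ≠ y) : ∃ z ∈ s, z ≠ x ∧ z ≠ y := by
  by_contra! h
  have hpair : s = {x, y} := by
    ext z
    grind
  exact hs (hpair ▸ Set.ncard_pair hxy)

lemma IsNonseparable.nontrivial_neighborSet (hB : IsNonseparable B) (hnt : B.verts.Nontrivial)
    (h2 : B.verts.ncard ≠ 2) {v : V} (hv : v ∈ B.verts) : (B.neighborSet v).Nontrivial := by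
  have := hnt.coe_sort
  obtain ⟨w, hw⟩ := hB.preconnected.exists_adj_of_nontrivial ⟨v, hv⟩
  obtain ⟨z, hz, hzv, hzw⟩ := exists_mem_ne_ne_of_ncard_ne_two h2 hv hw.snd_mem hw.ne
  have hv' : v ∈ (B.deleteVerts {w}).verts := ⟨hv, hw.ne⟩
  have : Nontrivial (B.deleteVerts {w}).verts :=
    Set.Nontrivial.coe_sort ⟨v, hv', z, ⟨hz, hzw⟩, hzv.symm⟩
  obtain ⟨x, hx⟩ := (hB {w} Set.subsingleton_singleton).exists_adj_of_nontrivial ⟨v, hv'⟩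
  exact ⟨w, hw, x, Subgraph.deleteVerts_le.2 hx, Ne.symm hx.snd_mem.2⟩

end Nonseparable

section Block

variable {V : Type*} {G : SimpleGraph V} {B C : G.Subgraph}

lemma isBlock_iff : IsBlock G B ↔ B.verts.Nonempty ∧ Maximal IsNonseparable B := by
  refine and_congr_right fun hne => ?_
  rw [← and_assoc, ← isNonseparable_iff_coe hne]
  refine and_congr_right fun _ => forall_congr' fun B' => ?_
  constructor
  · intro h hB' hle
    obtain ⟨h₁, h₂⟩ := (isNonseparable_iff_coe (hne.mono hle.1)).1 hB'
    exact (h hle h₁ h₂).ge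
  · intro h hle h₁ h₂
    exact hle.antisymm (h ((isNonseparable_iff_coe (hne.mono hle.1)).2 ⟨h₁, h₂⟩) hle)

lemma IsBlock.isNonseparable (hB : IsBlock G B) : IsNonseparable B :=
  (isBlock_iff.1 hB).2.prop

lemma IsNonseparable.exists_isBlock_ge (hC : IsNonseparable C) (hne : C.verts.Nonempty) :
    ∃ B, IsBlock G B ∧ C ≤ B := by
  obtain ⟨B, hle, hB⟩ := zorn_le_nonempty₀ {B : G.Subgraph | IsNonseparable B}
    (fun c hc hchain _ _ => ⟨_, .sSup hchain.directedOn hc, fun _ => le_sSup⟩) C hC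
  exact ⟨B, isBlock_iff.2 ⟨hne.mono hle.1, hB⟩, hle⟩

lemma IsBlock.nontrivial_verts (hB : IsBlock G B) (hG : ∀ v, ¬ G.IsIsolated v) :
    B.verts.Nontrivial := by
  obtain ⟨v, hv⟩ := hB.1
  by_contra! hsub
  obtain ⟨w, hw⟩ := exists_adj_iff_not_isIsolated.2 (hG v)
  have hle : B ≤ G.subgraphOfAdj hw :=
    ⟨fun x hx => Or.inl (hsub hx hv), fun x y hxy => absurd (hsub hxy.fst_mem hxy.snd_mem) hxy.ne⟩
  have hge := (isBlock_iff.1 hB).2.le_of_ge (isNonseparable_subgraphOfAdj hw) hle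
  exact hw.ne (hsub hv (hge.1 (Or.inr rfl)))

end Block

section CycleSubgraph

variable {V : Type*} {G : SimpleGraph V} {B C : G.Subgraph} {u : V} {c : G.Walk u u}

lemma le_of_forall_neighborSet_subset (hB : B.Preconnected) (hne : (B.verts ∩ C.verts).Nonempty)
    (h : ∀ v ∈ C.verts, B.neighborSet v ⊆ C.neighborSet v) : B ≤ C := by
  obtain ⟨x, hxB, hxC⟩ := hne
  have hverts : B.verts ⊆ C.verts := by
    intro y hy
    by_contra hyC
    obtain ⟨p, hp⟩ := (Subgraph.preconnected_iff_forall_exists_walk_subgraph _).1 hB hxB hy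
    obtain ⟨d, hd, hfst, hsnd⟩ := p.exists_boundary_dart C.verts hxC hyC
    have hadj : p.toSubgraph.Adj d.fst d.snd :=
      Walk.adj_toSubgraph_iff_mem_edges.2 (List.mem_map_of_mem hd)
    exact hsnd (h _ hfst (hp.2 hadj)).snd_mem
  exact ⟨hverts, fun y z hyz => h y (hverts hyz.fst_mem) hyz⟩

lemma ncard_neighborSet_of_isCycleGraph (hB : IsCycleGraph B.coe) {v : V} (hv : v ∈ B.verts) :
    (B.neighborSet v).ncard = 2 :=
  (Nat.card_congr (Subgraph.coeNeighborSetEquiv ⟨v, hv⟩)).symm.trans (hB.2 _)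

lemma toSubgraph_eq_of_isCycleGraph (hB : IsCycleGraph B.coe) (hc : c.IsCycle)
    (hle : c.toSubgraph ≤ B) : c.toSubgraph = B := by
  refine hle.antisymm (le_of_forall_neighborSet_subset ⟨hB.1.preconnected⟩
    ⟨u, hle.1 c.start_mem_verts_toSubgraph, c.start_mem_verts_toSubgraph⟩ fun v hv => ?_)
  have hcard := ncard_neighborSet_of_isCycleGraph hB (hle.1 hv)
  have hcycle := hc.ncard_neighborSet_toSubgraph_eq_two ((Walk.mem_verts_toSubgraph c).1 hv)
  exact (Set.eq_of_subset_of_ncard_le (fun _ hw => hle.2 hw) (hcard.trans hcycle.symm).le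
    (Set.finite_of_ncard_ne_zero (hcard.trans_ne two_ne_zero))).ge

lemma card_verts_ne_two_of_isCycle (hc : c.IsCycle) (hle : c.toSubgraph ≤ B) :
    Nat.card B.verts ≠ 2 := by
  intro h2
  rw [Nat.card_coe_set_eq] at h2
  have hdeg := hc.ncard_neighborSet_toSubgraph_eq_two c.start_mem_support
  have hsub : insert u (c.toSubgraph.neighborSet u) ⊆ B.verts :=
    Set.insert_subset (hle.1 c.start_mem_verts_toSubgraph)
      ((c.toSubgraph.neighborSet_subset_verts u).trans hle.1)
  have hle2 := Set.ncard_le_ncard hsub (Set.finite_of_ncard_ne_zero (by omega))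
  rw [Set.ncard_insert_of_notMem (fun h => h.ne rfl)
    (Set.finite_of_ncard_ne_zero (by omega))] at hle2
  omega

end CycleSubgraph

section EdgeReachable

variable {V : Type*} {G H : SimpleGraph V} {B : G.Subgraph} {u v m : V}

lemma isEdgeReachable_card_of_pairwise_disjoint {ι : Type*} [Fintype ι] (p : ι → G.Walk u v)
    (hp : Pairwise fun i j => (p i).edges.Disjoint (p j).edges) :
    G.IsEdgeReachable (Fintype.card ι) u v := by
  intro s hs
  by_contra hnot
  choose e hes hep using fun i => (p i).exists_mem_edges_of_not_reachable_deleteEdges hnot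
  have he : Function.Injective e := fun i j hij => by
    by_contra hne
    exact hp hne (hep i) (hij ▸ hep j)
  have hcard : (Set.range e).encard = Fintype.card ι := by
    rw [← Set.image_univ, he.encard_image, Set.encard_univ, ENat.card_eq_coe_fintype_card]
  exact hs.not_ge (hcard ▸ Set.encard_le_encard (Set.range_subset_iff.2 hes))

lemma isEdgeReachable_card_of_adj_of_walk {ι : Type*} [Fintype ι] {a : ι → V}
    (ha : Function.Injective a) (hadj : ∀ i, G.Adj v (a i)) (hle : H ≤ G) (hv : H.IsIsolated v)
    (p : ∀ i, H.Walk (a i) m) (hp : Pairwise fun i j => (p i).edges.Disjoint (p j).edges) :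
    G.IsEdgeReachable (Fintype.card ι) v m := by
  refine isEdgeReachable_card_of_pairwise_disjoint
    (fun i => .cons (hadj i) ((p i).mapLe hle)) fun i j hij => ?_
  have hnotMem (i j : ι) : s(v, a i) ∉ (p j).edges :=
    fun h => hv _ ((p j).edges_subset_edgeSet h)
  simp only [Walk.edges_cons, Walk.edges_mapLe_eq_edges, List.disjoint_cons_left,
    List.disjoint_cons_right, List.mem_cons, Sym2.congr_right, ha.eq_iff]
  have := hp hij
  grind

lemma exists_pairwise_disjoint_walks {a : Fin 3 → V} (h₁ : G.Reachable (a 0) (a 1))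
    (h₂ : G.Reachable (a 2) (a 0)) :
    ∃ m, ∃ p : ∀ i, G.Walk (a i) m, Pairwise fun i j => (p i).edges.Disjoint (p j).edges := by
  classical
  obtain ⟨w, hw⟩ := h₁.exists_isPath
  obtain ⟨q⟩ := h₂
  obtain ⟨m, hm, hmq, hfirst⟩ :=
    q.exists_mem_support_forall_mem_support_imp_eq w.support.toFinset ⟨a 0, by simp⟩
  rw [List.mem_toFinset] at hm
  have hdisj : w.edges.Disjoint (q.takeUntil m hmq).edges := by
    rintro ⟨x, y⟩ hxw hxq
    have hx := hfirst x (List.mem_toFinset.2 (w.fst_mem_support_of_mem_edges hxw))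
      (Walk.fst_mem_support_of_mem_edges _ hxq)
    have hy := hfirst y (List.mem_toFinset.2 (w.snd_mem_support_of_mem_edges hxw))
      (Walk.snd_mem_support_of_mem_edges _ hxq)
    exact (w.adj_of_mem_edges hxw).ne (hx.trans hy.symm)
  have h01 := hw.isTrail.disjoint_edges_takeUntil_dropUntil hm
  have h02 := List.disjoint_of_subset_left (w.edges_takeUntil_subset_edges hm) hdisj
  have h12 := List.disjoint_of_subset_left (w.edges_dropUntil_subset_edges hm) hdisj
  refine ⟨m, fun
    | 0 => w.takeUntil m hm
    | 1 => (w.dropUntil m hm).reverse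
    | 2 => q.takeUntil m hmq, fun i j hij => ?_⟩
  fin_cases i <;> fin_cases j <;> grind [List.Disjoint, Walk.edges_reverse]

lemma isIsolated_spanningCoe_deleteVerts : (B.deleteVerts {v}).spanningCoe.IsIsolated v :=
  fun _ hw => (Subgraph.deleteVerts_adj.1 hw).2.1 rfl

lemma IsNonseparable.reachable_spanningCoe_deleteVerts (hB : IsNonseparable B) {x y : V}
    (hx : B.Adj v x) (hy : B.Adj v y) : (B.deleteVerts {v}).spanningCoe.Reachable x y :=
  ((hB {v} Set.subsingleton_singleton).coe
    ⟨x, hx.snd_mem, hx.ne.symm⟩ ⟨y, hy.snd_mem, hy.ne.symm⟩).map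
    (Subgraph.coeEmbeddingSpanningCoe _).toHom

lemma IsNonseparable.isEdgeReachable_two (hB : IsNonseparable B) {a : Fin 2 → V}
    (ha : Function.Injective a) (hadj : ∀ i, B.Adj v (a i)) : G.IsEdgeReachable 2 v (a 0) := by
  obtain ⟨p⟩ := hB.reachable_spanningCoe_deleteVerts (hadj 1) (hadj 0)
  refine isEdgeReachable_card_of_adj_of_walk ha (fun i => (hadj i).adj_sub)
    (Subgraph.spanningCoe_le _) isIsolated_spanningCoe_deleteVerts
    (fun | 0 => .nil | 1 => p) fun i j hij => ?_
  fin_cases i <;> fin_cases j <;> simp at hij ⊢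

lemma IsNonseparable.exists_isEdgeReachable_three (hB : IsNonseparable B) {a : Fin 3 → V}
    (ha : Function.Injective a) (hadj : ∀ i, B.Adj v (a i)) :
    ∃ m, v ≠ m ∧ G.IsEdgeReachable 3 v m := by
  obtain ⟨m, p, hp⟩ := exists_pairwise_disjoint_walks
    (hB.reachable_spanningCoe_deleteVerts (hadj 0) (hadj 1))
    (hB.reachable_spanningCoe_deleteVerts (hadj 2) (hadj 0))
  refine ⟨m, ?_, isEdgeReachable_card_of_adj_of_walk ha (fun i => (hadj i).adj_sub)
    (Subgraph.spanningCoe_le _) isIsolated_spanningCoe_deleteVerts p hp⟩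
  rintro rfl
  exact (mem_support_iff_not_isIsolated _).1
    (mem_support_of_reachable (hadj 0).ne ⟨(p 0).reverse⟩) isIsolated_spanningCoe_deleteVerts

lemma IsBlock.card_eq_two_or_isCycleGraph (hB : IsBlock G B) (hG : ∀ v, ¬ G.IsIsolated v)
    (hcut : Pairwise fun u v => ¬ G.IsEdgeReachable 3 u v) :
    Nat.card B.verts = 2 ∨ IsCycleGraph B.coe := by
  rw [or_iff_not_imp_left, Nat.card_coe_set_eq]
  refine fun h2 => ⟨hB.2.1, fun v => ?_⟩
  rw [Nat.card_congr (Subgraph.coeNeighborSetEquiv v), Nat.card_coe_set_eq]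
  obtain ⟨x, hx, y, hy, hxy⟩ :=
    hB.isNonseparable.nontrivial_neighborSet (hB.nontrivial_verts hG) h2 v.2
  by_contra h
  obtain ⟨z, hz, hzx, hzy⟩ := exists_mem_ne_ne_of_ncard_ne_two h hx hy hxy
  obtain ⟨m, hvm, hm⟩ := hB.isNonseparable.exists_isEdgeReachable_three (v := v.1)
    (a := ![x, y, z]) (by simp [Function.Injective, Fin.forall_fin_succ, *, Ne.symm])
    (Fin.forall_fin_succ.2 ⟨hx, Fin.forall_fin_two.2 ⟨hy, hz⟩⟩)
  exact hcut hvm hm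

end EdgeReachable

section Coloring

variable {V : Type*} {G K T : SimpleGraph V} {u v : V} {k : ℕ} {c : Sym2 V → ℕ}

/-- `G` has a strong rainbow disconnection coloring with colors in `{0, …, k - 1}`. -/
def SRDColorable (G : SimpleGraph V) (k : ℕ) : Prop :=
  ∃ c : Sym2 V → ℕ, (∀ e ∈ G.edgeSet, c e < k) ∧ IsSRDColoring G c

lemma srd_eq_succ_iff : srd G = k + 1 ↔ SRDColorable G (k + 1) ∧ ¬ SRDColorable G k :=
  Nat.sInf_upward_closed_eq_succ_iff (s := {k | SRDColorable G k})
    (fun _ _ hle ⟨c, hlt, hc⟩ => ⟨c, fun e he => (hlt e he).trans_le hle, hc⟩) k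

lemma card_le_of_injOn_of_lt {α : Type*} {F : Finset α} {c : α → ℕ} (hc : ∀ e ∈ F, c e < k)
    (hinj : Set.InjOn c F) : F.card ≤ k := by
  simpa only [Finset.card_range] using
    Finset.card_le_card_of_injOn c (fun e he => Finset.mem_range.2 (hc e he)) hinj

lemma SRDColorable.not_isEdgeReachable (h : SRDColorable G k) (huv : u ≠ v) :
    ¬ G.IsEdgeReachable (k + 1) u v := by
  obtain ⟨c, hlt, hc⟩ := h
  obtain ⟨F, ⟨hFG, hF⟩, -, hinj⟩ := hc u v huv
  have hcard : F.card ≤ k := card_le_of_injOn_of_lt (fun e he => hlt e (hFG he)) hinj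
  refine fun hreach => hF (hreach ?_)
  rw [Set.encard_coe_eq_coe_finsetCard]
  exact_mod_cast Nat.lt_succ_of_le hcard

lemma CutsBetween.exists_card_eq_lam_injOn {F : Finset (Sym2 V)} (hF : CutsBetween G u v F)
    (hcard : F.card ≤ 2) (hinj : Set.InjOn c F) :
    ∃ F, CutsBetween G u v F ∧ F.card = lam G u v ∧ Set.InjOn c F := by
  obtain ⟨M, hM, hMcard⟩ : ∃ M, CutsBetween G u v M ∧ M.card = lam G u v :=
    Nat.sInf_mem (s := {n | ∃ F, CutsBetween G u v F ∧ F.card = n}) ⟨_, F, hF, rfl⟩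
  obtain hM1 | hM2 := Nat.lt_or_ge M.card 2
  · exact ⟨M, hM, hMcard, (Finset.card_le_one_iff_subsingleton.1 (by omega)).injOn c⟩
  · exact ⟨F, hF, le_antisymm (by omega) (Nat.sInf_le ⟨F, hF, rfl⟩), hinj⟩

/-- The edges of `G` joining two different components of `K`. If `K` is a spanning forest of `G`
with an edge removed, this is the corresponding fundamental cut. -/
def crossingEdges (G K : SimpleGraph V) : Set (Sym2 V) :=
  {e ∈ G.edgeSet | ¬ (e.map K.connectedComponentMk).IsDiag}

lemma mk_mem_crossingEdges {x y : V} :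
    s(x, y) ∈ crossingEdges G K ↔ G.Adj x y ∧ ¬ K.Reachable x y := by
  simp [crossingEdges]

lemma crossingEdges_subset_edgeSet : crossingEdges G K ⊆ G.edgeSet :=
  Set.sep_subset _ _

lemma not_reachable_deleteEdges_crossingEdges (h : ¬ K.Reachable u v) :
    ¬ (G.deleteEdges (crossingEdges G K)).Reachable u v := by
  refine fun ⟨p⟩ => h ?_
  clear h
  induction p with
  | nil => rfl
  | cons hadj p ih =>
    rw [deleteEdges_adj, mk_mem_crossingEdges] at hadj
    exact (not_not.1 (not_and.1 hadj.2 hadj.1)).trans (ih ⟨p⟩)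

lemma crossingEdges_deleteEdges_inter_edgeSet_subset (s : Set (Sym2 V)) :
    crossingEdges G (T.deleteEdges s) ∩ T.edgeSet ⊆ s := by
  rintro ⟨x, y⟩ ⟨hcross, hT⟩
  by_contra hs
  exact (mk_mem_crossingEdges.1 hcross).2 (deleteEdges_adj.2 ⟨hT, hs⟩).reachable

lemma injOn_indicator_one {α : Type*} {s t : Set α} (h₁ : (t ∩ s).Subsingleton)
    (h₂ : (t \ s).Subsingleton) : Set.InjOn (s.indicator (1 : α → ℕ)) t := by
  intro x hx y hy hxy
  by_cases hxs : x ∈ s <;> by_cases hys : y ∈ s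
  · exact h₁ ⟨hx, hxs⟩ ⟨hy, hys⟩
  · simp [hxs, hys] at hxy
  · simp [hxs, hys] at hxy
  · exact h₂ ⟨hx, hxs⟩ ⟨hy, hys⟩

lemma isSRDColoring_indicator_of_isAcyclic (hT : T.IsAcyclic)
    (h : ∀ e, (crossingEdges G (T.deleteEdges {e}) \ T.edgeSet).Subsingleton) :
    IsSRDColoring G (T.edgeSetᶜ.indicator 1) := by
  intro u v huv
  obtain ⟨e, he⟩ : ∃ e, ¬ (T.deleteEdges {e}).Reachable u v := by
    simpa only [isEdgeReachable_two, not_forall] using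
      isAcyclic_iff_pairwise_not_isEdgeReachable_two.1 hT huv
  have hinj : Set.InjOn (T.edgeSetᶜ.indicator (1 : Sym2 V → ℕ))
      (crossingEdges G (T.deleteEdges {e})) := by
    refine injOn_indicator_one (h e) ?_
    rw [Set.sdiff_compl]
    exact Set.subsingleton_singleton.anti (crossingEdges_deleteEdges_inter_edgeSet_subset {e})
  have hlt (f : Sym2 V) : T.edgeSetᶜ.indicator (1 : Sym2 V → ℕ) f < 2 :=
    Nat.lt_succ_of_le (Set.indicator_le_self _ _ f)
  obtain ⟨F, hF⟩ := (Set.Finite.of_injOn (t := Set.Iio 2) (fun f _ => hlt f) hinj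
    (Set.finite_Iio 2)).exists_finset_coe
  rw [← hF] at hinj
  refine CutsBetween.exists_card_eq_lam_injOn (F := F) ⟨?_, ?_⟩
    (card_le_of_injOn_of_lt (fun f _ => hlt f) hinj) hinj
  · exact hF ▸ crossingEdges_subset_edgeSet
  · exact hF ▸ not_reachable_deleteEdges_crossingEdges he

lemma srdColorable_one_iff : SRDColorable G 1 ↔ G.IsAcyclic := by
  refine ⟨fun h => isAcyclic_iff_pairwise_not_isEdgeReachable_two.2
    fun u v huv => h.not_isEdgeReachable huv, fun hG => ⟨_, fun e he => ?_,
    isSRDColoring_indicator_of_isAcyclic hG fun e => ?_⟩⟩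
  · simp [he]
  · rw [Set.sdiff_eq_empty.2 crossingEdges_subset_edgeSet]
    exact Set.subsingleton_empty

end Coloring

section Characterization

variable {V : Type*} {G T : SimpleGraph V} {u v : V} {e f : Sym2 V}

lemma exists_isCycle_of_mem_crossingEdges (hle : T ≤ G) (hreach : T.Reachable = G.Reachable)
    (hf : f ∈ crossingEdges G (T.deleteEdges {e}) \ T.edgeSet) :
    ∃ (x : V) (c : G.Walk x x), c.IsCycle ∧ e ∈ c.edges ∧ f ∈ c.edges ∧
      ∀ g ∈ c.edges, g ∈ T.edgeSet ∨ g = f := by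
  induction f with | _ x y
  obtain ⟨hcross, hfT⟩ := hf
  obtain ⟨hadj, hsep⟩ := mk_mem_crossingEdges.1 hcross
  obtain ⟨p, hp⟩ : ∃ p : T.Walk y x, p.IsPath :=
    Reachable.exists_isPath (hreach ▸ hadj.symm.reachable)
  have hep : e ∈ p.edges :=
    p.mem_edges_of_not_reachable_deleteEdges fun h => hsep h.symm
  refine ⟨x, .cons hadj (p.mapLe hle), ?_, ?_, ?_, ?_⟩
  · rw [Walk.cons_isCycle_iff, Walk.isPath_mapLe, Walk.edges_mapLe_eq_edges]
    exact ⟨hp, fun h => hfT (p.edges_subset_edgeSet h)⟩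
  · simp [hep]
  · simp
  · intro g hg
    rw [Walk.edges_cons, List.mem_cons, Walk.edges_mapLe_eq_edges] at hg
    exact hg.symm.imp_left fun h => p.edges_subset_edgeSet h

lemma IsNonseparable.not_isAcyclic {B : G.Subgraph} (hB : IsNonseparable B)
    (hcyc : IsCycleGraph B.coe) : ¬ G.IsAcyclic := by
  obtain ⟨⟨v, hv⟩⟩ := hcyc.1.nonempty
  obtain ⟨x, y, hxy, hnbr⟩ := Set.ncard_eq_two.1 (ncard_neighborSet_of_isCycleGraph hcyc hv)
  have hvx : B.Adj v x := hnbr.ge (Or.inl rfl)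
  have hvy : B.Adj v y := hnbr.ge (Or.inr rfl)
  have h2 : G.IsEdgeReachable 2 v x :=
    hB.isEdgeReachable_two (a := ![x, y])
      (by simp [Function.Injective, Fin.forall_fin_succ, hxy, hxy.symm])
      (Fin.forall_fin_two.2 ⟨hvx, hvy⟩)
  exact fun h => isAcyclic_iff_pairwise_not_isEdgeReachable_two.1 h hvx.ne h2

lemma exists_isBlock_isCycleGraph_of_not_isAcyclic
    (h : ∀ B : G.Subgraph, IsBlock G B → Nat.card B.verts = 2 ∨ IsCycleGraph B.coe)
    (hG : ¬ G.IsAcyclic) : ∃ B : G.Subgraph, IsBlock G B ∧ IsCycleGraph B.coe := by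
  simp only [IsAcyclic, not_forall, not_not] at hG
  obtain ⟨u, c, hc⟩ := hG
  obtain ⟨B, hB, hle⟩ := (isNonseparable_toSubgraph_of_isCycle hc).exists_isBlock_ge
    ⟨u, c.start_mem_verts_toSubgraph⟩
  exact ⟨B, hB, (h B hB).resolve_left (card_verts_ne_two_of_isCycle hc hle)⟩

lemma toSubgraph_eq_toSubgraph_of_isCycle
    (h : ∀ B : G.Subgraph, IsBlock G B → Nat.card B.verts = 2 ∨ IsCycleGraph B.coe)
    {c : G.Walk u u} {d : G.Walk v v} (hc : c.IsCycle) (hd : d.IsCycle) (hec : e ∈ c.edges)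
    (hed : e ∈ d.edges) : c.toSubgraph = d.toSubgraph := by
  have hcd : (c.toSubgraph.verts ∩ d.toSubgraph.verts).Nontrivial := by
    induction e with | _ x y
    rw [← Walk.adj_toSubgraph_iff_mem_edges] at hec hed
    exact ⟨x, ⟨hec.fst_mem, hed.fst_mem⟩, y, ⟨hec.snd_mem, hed.snd_mem⟩, hec.ne⟩
  obtain ⟨B, hB, hle⟩ := ((isNonseparable_toSubgraph_of_isCycle hc).sup
    (isNonseparable_toSubgraph_of_isCycle hd) hcd).exists_isBlock_ge
      ⟨u, Or.inl c.start_mem_verts_toSubgraph⟩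
  rw [sup_le_iff] at hle
  have hBcyc := (h B hB).resolve_left (card_verts_ne_two_of_isCycle hc hle.1)
  rw [toSubgraph_eq_of_isCycleGraph hBcyc hc hle.1, toSubgraph_eq_of_isCycleGraph hBcyc hd hle.2]

lemma subsingleton_crossingEdges_sdiff_edgeSet
    (h : ∀ B : G.Subgraph, IsBlock G B → Nat.card B.verts = 2 ∨ IsCycleGraph B.coe)
    (hle : T ≤ G) (hreach : T.Reachable = G.Reachable) (e : Sym2 V) :
    (crossingEdges G (T.deleteEdges {e}) \ T.edgeSet).Subsingleton := by
  intro f hf g hg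
  obtain ⟨x, c, hc, hec, hfc, -⟩ := exists_isCycle_of_mem_crossingEdges hle hreach hf
  obtain ⟨y, d, hd, hed, -, hdT⟩ := exists_isCycle_of_mem_crossingEdges hle hreach hg
  rw [← Walk.mem_edges_toSubgraph, toSubgraph_eq_toSubgraph_of_isCycle h hc hd hec hed,
    Walk.mem_edges_toSubgraph] at hfc
  exact (hdT f hfc).resolve_left hf.2

lemma srdColorable_two_iff (hG : ∀ v, ¬ G.IsIsolated v) : SRDColorable G 2 ↔
    ∀ B : G.Subgraph, IsBlock G B → Nat.card B.verts = 2 ∨ IsCycleGraph B.coe := by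
  refine ⟨fun h B hB => hB.card_eq_two_or_isCycleGraph hG fun u v huv =>
    h.not_isEdgeReachable huv, fun h => ?_⟩
  obtain ⟨T, hle, hT, hreach⟩ := G.exists_isAcyclic_reachable_eq_le
  exact ⟨_, fun e _ => Nat.lt_succ_of_le (Set.indicator_le_self _ _ e),
    isSRDColoring_indicator_of_isAcyclic hT (subsingleton_crossingEdges_sdiff_edgeSet h hle hreach)⟩

theorem stmt4_general {V : Type*} (G : SimpleGraph V) (hG : ∀ v, ¬ G.IsIsolated v) :
    srd G = 2 ↔
      (∀ B : G.Subgraph, IsBlock G B → Nat.card B.verts = 2 ∨ IsCycleGraph B.coe) ∧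
      (∃ B : G.Subgraph, IsBlock G B ∧ IsCycleGraph B.coe) := by
  rw [srd_eq_succ_iff, srdColorable_two_iff hG, srdColorable_one_iff]
  exact and_congr_right fun h => ⟨exists_isBlock_isCycleGraph_of_not_isAcyclic h,
    fun ⟨_, hB, hcyc⟩ => hB.isNonseparable.not_isAcyclic hcyc⟩

end Characterization

theorem stmt4 {V : Type*} [Fintype V] (G : SimpleGraph V) (hV : Nontrivial V)
    (hG : G.Connected) :
    srd G = 2 ↔
      (∀ B : G.Subgraph, IsBlock G B → Nat.card B.verts = 2 ∨ IsCycleGraph B.coe) ∧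
      (∃ B : G.Subgraph, IsBlock G B ∧ IsCycleGraph B.coe) :=
  stmt4_general G hG.preconnected.not_isIsolated
end
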